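/- Let ℓ be a prime, G a finite ℓ-group, and L/ℚ a finite Galois extension with Galois group isomorphic to G which is tamely ramified (every rational prime p that ramifies in L is prime to |G|). Then the number of rational primes that ramify in L is at least rank(G), the minimal number of generators of G. -/

import Mathlib

/-!
Tameness makes the inertia group of each prime `P` cyclic: it acts faithfully on the line
`P / P ^ 2` over the residue field. The subfield of `L` fixed by all inertia
groups is unramified over `ℚ`, hence equal to `ℚ` by Minkowski's theorem, so the inertia groups
generate the Galois group; those of primes above the same `p` are conjugate. Hence the Galois group
is the normal closure of one element for each ramified prime. In a nilpotent group maximal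
subgroups are normal, so these elements already generate.
-/

open NumberField

/-- A rational prime `p` ramifies in the number field `L`: some prime ideal of the ring
of integers of `L` has ramification index greater than one over `p`, i.e. the square of
a prime ideal divides `p 𝓞_L`. -/
def RamifiesIn (p : ℕ) (L : Type*) [Field L] [NumberField L] : Prop :=
  ∃ P : Ideal (𝓞 L), P.IsPrime ∧ Ideal.span {(p : 𝓞 L)} ≤ P ^ 2

section Inertia

variable {S G : Type*} [CommRing S] [Group G] [MulSemiringAction G S] {P : Ideal S} {σ : G}

open scoped Pointwise in
lemma smul_mem_pow_of_mem_inertia (hσ : σ ∈ P.inertia G) {k : ℕ} {y : S} (hy : y ∈ P ^ k) :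
    σ • y ∈ P ^ k := by
  have hσP : σ • P = P := P.inertia_le_stabilizer hσ
  simpa only [smul_pow', hσP] using Ideal.smul_mem_pointwise_smul σ y (P ^ k) hy

lemma smul_mem_of_mem_inertia (hσ : σ ∈ P.inertia G) {y : S} (hy : y ∈ P) : σ • y ∈ P := by
  simpa using smul_mem_pow_of_mem_inertia (k := 1) hσ (by simpa using hy)

lemma smul_sub_mem_pow_succ_of_forall_mem_sq (hσ : σ ∈ P.inertia G)
    (h : ∀ y ∈ P, σ • y - y ∈ P ^ 2) {k : ℕ} {y : S} (hy : y ∈ P ^ k) :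
    σ • y - y ∈ P ^ (k + 1) := by
  induction k generalizing y with
  | zero => simpa using hσ y
  | succ k ih =>
    rw [pow_succ] at hy
    induction hy using Submodule.mul_induction_on' with
    | mem_mul_mem a ha b hb =>
      have h₁ : (σ • a) * (σ • b - b) ∈ P ^ (k + 1 + 1) := by
        rw [add_assoc, pow_add]
        exact Ideal.mul_mem_mul (smul_mem_pow_of_mem_inertia hσ ha) (h b hb)
      have h₂ : (σ • a - a) * b ∈ P ^ (k + 1 + 1) := by
        rw [pow_succ]
        exact Ideal.mul_mem_mul (ih ha) hb
      convert add_mem h₁ h₂ using 1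
      rw [smul_mul']
      ring
    | add a _ b _ ha hb =>
      convert add_mem ha hb using 1
      rw [smul_add]
      ring

lemma pow_smul_sub_natCast_mul_mem_pow_succ (hσ : σ ∈ P.inertia G)
    (h : ∀ y ∈ P, σ • y - y ∈ P ^ 2) {k : ℕ} {x : S} (hx : σ • x - x ∈ P ^ k) (n : ℕ) :
    σ ^ n • x - x - n * (σ • x - x) ∈ P ^ (k + 1) := by
  induction n with
  | zero => simp
  | succ n ih =>
    have h₁ := smul_mem_pow_of_mem_inertia hσ ih
    have h₂ := Ideal.mul_mem_left _ (n : S) (smul_sub_mem_pow_succ_of_forall_mem_sq hσ h hx)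
    convert add_mem h₁ h₂ using 1
    have hn : σ • (n : S) = n := map_natCast (MulSemiringAction.toRingHom G S σ) n
    rw [pow_succ', mul_smul, smul_sub, smul_sub, smul_mul', hn]
    push_cast
    ring

lemma eq_one_of_forall_smul_sub_mem_sq [IsNoetherianRing S] [IsDomain S] [FaithfulSMul G S]
    [P.IsMaximal] (hσ : σ ∈ P.inertia G) (h : ∀ y ∈ P, σ • y - y ∈ P ^ 2) {n : ℕ}
    (hn : σ ^ n = 1) (hnP : (n : S) ∉ P) : σ = 1 := by
  -- Modulo `P ^ (k + 1)`, `σ ^ m • x - x` is linear in `m`, and it vanishes for `m = n`.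
  have hmem (x : S) (k : ℕ) : σ • x - x ∈ P ^ k := by
    induction k with
    | zero => simp
    | succ k ih =>
      have hnx : (n : S) * (σ • x - x) ∈ P ^ (k + 1) := by
        simpa [hn] using pow_smul_sub_natCast_mul_mem_pow_succ hσ h ih n
      exact (Ideal.IsMaximal.mul_mem_pow P hnx).resolve_left hnP
  refine FaithfulSMul.eq_of_smul_eq_smul (α := S) fun x ↦ ?_
  rw [one_smul, ← sub_eq_zero, ← Ideal.mem_bot,
    ← Ideal.iInf_pow_eq_bot_of_isDomain P Ideal.IsPrime.ne_top', Ideal.mem_iInf]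
  exact hmem x

lemma mul_smul_sub_mul_mem_sq {τ : G} {a b : S} (hτ : τ ∈ P.inertia G)
    (ha : ∀ y ∈ P, σ • y - a * y ∈ P ^ 2) (hb : ∀ y ∈ P, τ • y - b * y ∈ P ^ 2) :
    ∀ y ∈ P, (σ * τ) • y - a * b * y ∈ P ^ 2 := by
  intro y hy
  convert add_mem (ha _ (smul_mem_of_mem_inertia hτ hy)) (Ideal.mul_mem_left _ a (hb y hy)) using 1
  rw [mul_smul]
  ring

open scoped Pointwise in
lemma inertia_smul_le_of_normal {N : Subgroup G} [N.Normal] (τ : G) (h : P.inertia G ≤ N) :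
    (τ • P).inertia G ≤ N := by
  intro σ hσ
  have hconj : τ⁻¹ * σ * τ ∈ P.inertia G := fun x ↦ by
    have hx := (Ideal.mem_pointwise_smul_iff_inv_smul_mem (a := τ)).mp (hσ (τ • x))
    simpa [mul_smul, smul_sub] using hx
  simpa [mul_assoc] using Subgroup.Normal.conj_mem ‹_› _ (h hconj) τ

end Inertia

section TameCharacter

variable {S G : Type*} [CommRing S] [IsDedekindDomain S] [Group G] [MulSemiringAction G S]
  {P : Ideal S} [P.IsPrime]

lemma exists_mem_notMem_sq (hP : P ≠ ⊥) : ∃ π ∈ P, π ∉ P ^ 2 :=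
  SetLike.exists_of_lt
    (by simpa using Ideal.pow_right_strictAnti P hP Ideal.IsPrime.ne_top' one_lt_two)

lemma mem_of_forall_mul_mem_sq (hP : P ≠ ⊥) {a : S} (h : ∀ y ∈ P, a * y ∈ P ^ 2) : a ∈ P := by
  obtain ⟨π, hπ, hπ'⟩ := exists_mem_notMem_sq hP
  exact (Ideal.IsPrime.mul_mem_pow P (h π hπ)).resolve_right hπ'

lemma exists_forall_smul_sub_mul_mem_sq (hP : P ≠ ⊥) {σ : G} (hσ : σ ∈ P.inertia G) :
    ∃ a : S, ∀ y ∈ P, σ • y - a * y ∈ P ^ 2 := by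
  obtain ⟨π, hπ, hπ'⟩ := exists_mem_notMem_sq hP
  have exists_mul_add {y : S} (hy : y ∈ P) : ∃ c, ∃ e ∈ P ^ 2, π * c + e = y :=
    Ideal.exists_mul_add_mem_pow_succ (i := 1) hP π y (by simpa using hπ) hπ' (by simpa using hy)
  obtain ⟨a, r, hr, ha⟩ := exists_mul_add (smul_mem_of_mem_inertia hσ hπ)
  refine ⟨a, fun y hy ↦ ?_⟩
  obtain ⟨c, e, he, rfl⟩ := exists_mul_add hy
  have h₁ : (σ • c - c) * (σ • π) ∈ P ^ 2 := by
    rw [pow_two]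
    exact Ideal.mul_mem_mul (hσ c) (smul_mem_of_mem_inertia hσ hπ)
  have h₂ : σ • e - a * e ∈ P ^ 2 :=
    sub_mem (smul_mem_pow_of_mem_inertia hσ he) (Ideal.mul_mem_left _ a he)
  convert add_mem (add_mem h₁ h₂) (Ideal.mul_mem_left _ c hr) using 1
  rw [smul_add, smul_mul', ← ha]
  ring

lemma quotientMk_eq_of_forall_smul_sub_mul_mem_sq (hP : P ≠ ⊥) {σ : G} {a b : S}
    (ha : ∀ y ∈ P, σ • y - a * y ∈ P ^ 2) (hb : ∀ y ∈ P, σ • y - b * y ∈ P ^ 2) :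
    Ideal.Quotient.mk P a = Ideal.Quotient.mk P b := by
  refine Ideal.Quotient.eq.mpr (mem_of_forall_mul_mem_sq hP fun y hy ↦ ?_)
  simpa [sub_mul] using sub_mem (hb y hy) (ha y hy)

/-- The tame character of a nonzero prime `P`: the inertia group of `P` acts `S ⧸ P`-linearly on
the line `P / P ^ 2`, and `σ` is sent to the scalar by which it acts. The scalar is encoded by a
lift to `S`, so that `P / P ^ 2` does not appear as a module. -/
noncomputable def tameCharacter (hP : P ≠ ⊥) : P.inertia G →* S ⧸ P where
  toFun σ := Ideal.Quotient.mk P (exists_forall_smul_sub_mul_mem_sq hP σ.2).choose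
  map_one' := by
    rw [← map_one (Ideal.Quotient.mk P)]
    exact quotientMk_eq_of_forall_smul_sub_mul_mem_sq hP
      (exists_forall_smul_sub_mul_mem_sq hP (one_mem (P.inertia G))).choose_spec (by simp)
  map_mul' σ τ := by
    rw [← map_mul]
    exact quotientMk_eq_of_forall_smul_sub_mul_mem_sq hP
      (exists_forall_smul_sub_mul_mem_sq hP (σ * τ).2).choose_spec
      (mul_smul_sub_mul_mem_sq τ.2 (exists_forall_smul_sub_mul_mem_sq hP σ.2).choose_spec
        (exists_forall_smul_sub_mul_mem_sq hP τ.2).choose_spec)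

lemma tameCharacter_eq_mk_iff (hP : P ≠ ⊥) {σ : P.inertia G} {a : S} :
    tameCharacter hP σ = Ideal.Quotient.mk P a ↔ ∀ y ∈ P, (σ : G) • y - a * y ∈ P ^ 2 := by
  have hσ := (exists_forall_smul_sub_mul_mem_sq hP σ.2).choose_spec
  refine ⟨fun h y hy ↦ ?_, quotientMk_eq_of_forall_smul_sub_mul_mem_sq hP hσ⟩
  have hmul := Ideal.mul_mem_mul (Ideal.Quotient.eq.mp h) hy
  rw [← pow_two] at hmul
  convert add_mem (hσ y hy) hmul using 1
  ring

lemma tameCharacter_injective [FaithfulSMul G S] (hP : P ≠ ⊥)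
    (hcard : (Nat.card (P.inertia G) : S) ∉ P) :
    Function.Injective (tameCharacter hP : P.inertia G →* S ⧸ P) := by
  have : P.IsMaximal := Ideal.IsPrime.isMaximal ‹_› hP
  refine (injective_iff_map_eq_one _).mpr fun σ hσ ↦ Subtype.ext ?_
  rw [← map_one (Ideal.Quotient.mk P), tameCharacter_eq_mk_iff] at hσ
  refine eq_one_of_forall_smul_sub_mem_sq σ.2 (by simpa using hσ) ?_ hcard
  exact congrArg Subtype.val (pow_card_eq_one' (x := σ))

theorem isCyclic_inertia_of_natCard_notMem [FaithfulSMul G S] (hP : P ≠ ⊥)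
    (hcard : (Nat.card (P.inertia G) : S) ∉ P) : IsCyclic (P.inertia G) := by
  have : Finite (P.inertia G) := Nat.finite_of_card_ne_zero fun h ↦ hcard <| by
    rw [h, Nat.cast_zero]
    exact P.zero_mem
  exact isCyclic_of_injective_ringHom _ (tameCharacter_injective hP hcard)

end TameCharacter

theorem closure_eq_top_of_normalClosure_eq_top {G : Type*} [Group G] [IsCoatomic (Subgroup G)]
    (hG : NormalizerCondition G) {s : Set G} (hs : Subgroup.normalClosure s = ⊤) :
    Subgroup.closure s = ⊤ := by
  refine (eq_top_or_exists_le_coatom _).resolve_right fun ⟨M, hM, hsM⟩ ↦ hM.1 ?_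
  have : M.Normal := Subgroup.NormalizerCondition.normal_of_coatom M hG hM
  exact top_le_iff.mp
    (hs ▸ Subgroup.normalClosure_le_normal (Subgroup.subset_closure.trans hsM))

lemma natCast_notMem_of_coprime {R : Type*} [Ring R] {I : Ideal R} (hI : I ≠ ⊤) {m n : ℕ}
    (hmn : m.Coprime n) (hm : (m : R) ∈ I) : (n : R) ∉ I := by
  intro hn
  refine hI ((Ideal.eq_top_iff_one I).mpr ?_)
  obtain ⟨a, b, hab⟩ : IsCoprime (m : ℤ) n := hmn.isCoprime
  have hab' : (a : R) * m + b * n = 1 := mod_cast congrArg (Int.cast (R := R)) hab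
  exact hab' ▸ add_mem (I.mul_mem_left _ hm) (I.mul_mem_left _ hn)

lemma card_inertia_eq_ramificationIdx (R : Type*) {S G : Type*} [CommRing R] [IsDomain R]
    [CommRing S] [IsDomain S] [Algebra R S] [Module.Finite R S] [Module.Flat R S] [Group G]
    [Finite G] [MulSemiringAction G S] [IsGaloisGroup G R S] (P : Ideal S) [P.IsPrime]
    [PerfectField (P.under R).ResidueField] :
    Nat.card (P.inertia G) = P.ramificationIdx R := by
  rw [Ideal.card_inertia_eq_ramificationIdxIn (P.under R) P,
    Ideal.ramificationIdxIn_eq_ramificationIdx (P.under R) P G]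

lemma liesOver_span_natCast {S : Type*} [CommRing S] {p : ℕ} (hp : p.Prime) {P : Ideal S}
    [P.IsPrime] (hpP : (p : S) ∈ P) : P.LiesOver (Ideal.span {(p : ℤ)}) :=
  (Ideal.liesOver_span_iff Ideal.IsPrime.ne_top' (Nat.prime_iff_prime_int.mp hp)).mpr
    (by simpa using hpP)

lemma ramificationIdx_int_ne_one_iff {S : Type*} [CommRing S] [IsDedekindDomain S] [CharZero S]
    {p : ℕ} (hp : p.Prime) {P : Ideal S} [P.IsPrime] (hpP : (p : S) ∈ P) :
    P.ramificationIdx ℤ ≠ 1 ↔ Ideal.span {(p : S)} ≤ P ^ 2 := by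
  have := liesOver_span_natCast hp hpP
  have hmap : (Ideal.span {(p : ℤ)}).map (algebraMap ℤ S) = Ideal.span {(p : S)} := by
    simp [Ideal.map_span]
  have hle : (Ideal.span {(p : ℤ)}).map (algebraMap ℤ S) ≤ P := by
    rwa [hmap, Ideal.span_singleton_le_iff_mem]
  rw [← Ideal.ramificationIdx'_eq_ramificationIdx (Ideal.span {(p : ℤ)}) P
    (by simpa using hp.ne_zero), Ideal.ramificationIdx'_ne_one_iff hle, hmap]

lemma inertia_le_of_normal_of_mem {S G : Type*} [CommRing S] [Group G] [Finite G]
    [MulSemiringAction G S] [IsGaloisGroup G ℤ S] {p : ℕ} (hp : p.Prime) {P Q : Ideal S}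
    [P.IsPrime] [Q.IsPrime] (hpP : (p : S) ∈ P) (hpQ : (p : S) ∈ Q)
    {N : Subgroup G} [N.Normal] (h : P.inertia G ≤ N) : Q.inertia G ≤ N := by
  have := liesOver_span_natCast hp hpP
  have := liesOver_span_natCast hp hpQ
  obtain ⟨τ, rfl⟩ := Ideal.exists_smul_eq_of_isGaloisGroup (Ideal.span {(p : ℤ)}) P Q G
  exact inertia_smul_le_of_normal τ h

section RamifiedPrimes

variable {L : Type*} [Field L] [NumberField L]

lemma ramifiesIn_iff_exists_ramificationIdx_ne_one {p : ℕ} (hp : p.Prime) :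
    RamifiesIn p L ↔
      ∃ P : Ideal (𝓞 L), P.IsPrime ∧ (p : 𝓞 L) ∈ P ∧ P.ramificationIdx ℤ ≠ 1 := by
  refine exists_congr fun P ↦ and_congr_right fun _ ↦ ⟨fun h ↦ ?_, fun ⟨hpP, h⟩ ↦ ?_⟩
  · have hpP : (p : 𝓞 L) ∈ P :=
      Ideal.pow_le_self two_ne_zero (h (Ideal.mem_span_singleton_self _))
    exact ⟨hpP, (ramificationIdx_int_ne_one_iff hp hpP).mpr h⟩
  · exact (ramificationIdx_int_ne_one_iff hp hpP).mp h

lemma ramifiesIn_iff_dvd_discr {p : ℕ} (hp : p.Prime) : RamifiesIn p L ↔ (p : ℤ) ∣ discr L := by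
  rw [ramifiesIn_iff_exists_ramificationIdx_ne_one hp, ← not_iff_not,
    not_dvd_discr_iff_forall_mem L (𝓞 L) (Nat.prime_iff_prime_int.mp hp)]
  push Not
  exact forall₂_congr fun P _ ↦ imp_congr (by simp) Ideal.ramificationIdx_eq_one_iff

variable (L) in
lemma finite_setOf_ramifiesIn : {p : ℕ | p.Prime ∧ RamifiesIn p L}.Finite :=
  (discr L).natAbs.primeFactors.finite_toSet.subset fun p ⟨hp, h⟩ ↦ by
    simpa [hp, discr_ne_zero] using Int.natCast_dvd.mp ((ramifiesIn_iff_dvd_discr hp).mp h)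

variable {G : Type*} [Group G] [MulSemiringAction G L] [IsGaloisGroup G ℚ L]

lemma ramificationIdx_int_eq_one_of_inertia_le (M : Subgroup G) (Q : Ideal (𝓞 L)) [Q.IsMaximal]
    (h : Q.inertia G ≤ M) :
    (Q.under (𝓞 (FixedPoints.intermediateField M : IntermediateField ℚ L))).ramificationIdx ℤ
      = 1 := by
  let K : IntermediateField ℚ L := FixedPoints.intermediateField M
  have : Finite G := IsGaloisGroup.finite G ℚ L
  have : IsGaloisGroup M K L := IsGaloisGroup.subgroup G ℚ L M
  have : IsGaloisGroup M (𝓞 K) (𝓞 L) := IsGaloisGroup.of_isFractionRing M (𝓞 K) (𝓞 L) K L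
  have hcard : Nat.card (Q.inertia G) = Nat.card (Q.inertia M) := by
    rw [← Subgroup.card_map_of_injective M.subtype_injective, AddSubgroup.inertia_map_subtype,
      inf_eq_left.mpr h]
  rw [card_inertia_eq_ramificationIdx ℤ Q, card_inertia_eq_ramificationIdx (𝓞 K) Q,
    Ideal.ramificationIdx_tower (R := ℤ) (Q.under (𝓞 K)) Q] at hcard
  exact (mul_eq_right₀ (Ideal.ramificationIdx_pos Q (𝓞 K)).ne').mp hcard

variable (L G) in
theorem iSup_inertia_eq_top : ⨆ P : MaximalSpectrum (𝓞 L), P.asIdeal.inertia G = ⊤ := by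
  set M : Subgroup G := ⨆ P : MaximalSpectrum (𝓞 L), P.asIdeal.inertia G
  let K : IntermediateField ℚ L := FixedPoints.intermediateField M
  have : IsGaloisGroup M K L := IsGaloisGroup.subgroup G ℚ L M
  have : Finite G := IsGaloisGroup.finite G ℚ L
  have hK : Module.finrank ℚ K = 1 := by
    by_contra hK
    obtain ⟨P, _, hP⟩ := exists_not_isUnramifiedAt_int (𝒪 := 𝓞 K) hK
    obtain ⟨Q, hQ, hQP⟩ := Ideal.exists_maximal_ideal_liesOver_of_isIntegral (S := 𝓞 L) P
    refine hP (Ideal.ramificationIdx_eq_one_iff.mp ?_)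
    rw [hQP.over]
    exact ramificationIdx_int_eq_one_of_inertia_le M Q
      (le_iSup (fun P : MaximalSpectrum (𝓞 L) ↦ P.asIdeal.inertia G) ⟨Q, hQ⟩)
  refine Subgroup.eq_top_of_card_eq M ?_
  rw [IsGaloisGroup.card_eq_finrank M K L, IsGaloisGroup.card_eq_finrank G ℚ L,
    ← Module.finrank_mul_finrank ℚ K L, hK, one_mul]

lemma inertia_eq_bot_of_not_ramifiesIn {p : ℕ} (hp : p.Prime) {P : Ideal (𝓞 L)} [P.IsPrime]
    (hpP : (p : 𝓞 L) ∈ P) (h : ¬ RamifiesIn p L) : P.inertia G = ⊥ := by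
  have : Finite G := IsGaloisGroup.finite G ℚ L
  rw [← Subgroup.card_eq_one, card_inertia_eq_ramificationIdx ℤ]
  by_contra hP
  exact h ((ramifiesIn_iff_exists_ramificationIdx_ne_one hp).mpr ⟨P, ‹_›, hpP, hP⟩)

lemma exists_inertia_eq_zpowers {P : Ideal (𝓞 L)} [P.IsPrime] (hP : P ≠ ⊥)
    (htame : (P.ramificationIdx ℤ : 𝓞 L) ∉ P) : ∃ g : G, P.inertia G = Subgroup.zpowers g := by
  have : Finite G := IsGaloisGroup.finite G ℚ L
  have : FaithfulSMul G (𝓞 L) := IsGaloisGroup.faithful ℤ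
  rw [← card_inertia_eq_ramificationIdx (G := G) ℤ P] at htame
  obtain ⟨g, hg⟩ := Subgroup.isCyclic_iff_exists_zpowers_eq_top (P.inertia G) |>.mp
    (isCyclic_inertia_of_natCard_notMem hP htame)
  exact ⟨g, hg.symm⟩

theorem exists_normalClosure_image_ramifiesIn_eq_top
    (htame : ∀ P : Ideal (𝓞 L), P.IsMaximal → (P.ramificationIdx ℤ : 𝓞 L) ∉ P) :
    ∃ g : ℕ → G, Subgroup.normalClosure (g '' {p | p.Prime ∧ RamifiesIn p L}) = ⊤ := by
  have hgen (p : ℕ) (hp : p.Prime) (hram : RamifiesIn p L) : ∃ g : G, ∃ P : Ideal (𝓞 L),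
      P.IsPrime ∧ (p : 𝓞 L) ∈ P ∧ P.inertia G = Subgroup.zpowers g := by
    obtain ⟨P, hP, hpP, -⟩ := (ramifiesIn_iff_exists_ramificationIdx_ne_one hp).mp hram
    have hP0 : P ≠ ⊥ := fun h ↦ hp.ne_zero (by simpa [h] using hpP)
    obtain ⟨g, hg⟩ := exists_inertia_eq_zpowers (G := G) hP0 (htame P (hP.isMaximal hP0))
    exact ⟨g, P, hP, hpP, hg⟩
  choose! g hg using hgen
  refine ⟨g, top_le_iff.mp (iSup_inertia_eq_top L G ▸ iSup_le fun ⟨Q, hQ⟩ ↦ ?_)⟩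
  have : Finite G := IsGaloisGroup.finite G ℚ L
  let p := Ideal.absNorm (Q.under ℤ)
  have hp : p.Prime := Nat.absNorm_under_prime Q
  have hpQ : (p : 𝓞 L) ∈ Q := mod_cast Int.absNorm_under_mem Q
  by_cases hram : RamifiesIn p L
  · obtain ⟨P, _, hpP, hPg⟩ := hg p hp hram
    refine inertia_le_of_normal_of_mem hp hpP hpQ (hPg ▸ Subgroup.zpowers_le.mpr ?_)
    exact Subgroup.subset_normalClosure ⟨p, ⟨hp, hram⟩, rfl⟩
  · simp [inertia_eq_bot_of_not_ramifiesIn hp hpQ hram]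

lemma ramificationIdx_int_notMem_of_coprime_card
    (htame : ∀ p : ℕ, p.Prime → RamifiesIn p L → p.Coprime (Nat.card G))
    (P : Ideal (𝓞 L)) [P.IsMaximal] : (P.ramificationIdx ℤ : 𝓞 L) ∉ P := by
  have : Finite G := IsGaloisGroup.finite G ℚ L
  let p := Ideal.absNorm (P.under ℤ)
  have hp : p.Prime := Nat.absNorm_under_prime P
  have hpP : (p : 𝓞 L) ∈ P := mod_cast Int.absNorm_under_mem P
  refine natCast_notMem_of_coprime Ideal.IsPrime.ne_top' ?_ hpP
  rw [← card_inertia_eq_ramificationIdx (G := G) ℤ P]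
  by_cases hram : RamifiesIn p L
  · exact (htame p hp hram).of_dvd_right (Subgroup.card_subgroup_dvd_card _)
  · simp [inertia_eq_bot_of_not_ramifiesIn hp hpP hram]

theorem rank_le_card_ramified_primes_general [Group.FG G] [Group.IsNilpotent G]
    (htame : ∀ P : Ideal (𝓞 L), P.IsMaximal → (P.ramificationIdx ℤ : 𝓞 L) ∉ P) :
    Group.rank G ≤ {p : ℕ | p.Prime ∧ RamifiesIn p L}.ncard := by
  classical
  have : Finite G := IsGaloisGroup.finite G ℚ L
  have hfin := finite_setOf_ramifiesIn L
  obtain ⟨g, hg⟩ := exists_normalClosure_image_ramifiesIn_eq_top (G := G) htame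
  have hclosure := closure_eq_top_of_normalClosure_eq_top
    Group.normalizerCondition_of_isNilpotent hg
  calc Group.rank G ≤ (hfin.toFinset.image g).card := Group.rank_le (by simpa using hclosure)
    _ ≤ hfin.toFinset.card := Finset.card_image_le
    _ = {p : ℕ | p.Prime ∧ RamifiesIn p L}.ncard := (Set.ncard_eq_toFinset_card _ hfin).symm

end RamifiedPrimes

/-- Let `ℓ` be a prime, `G` a finite `ℓ`-group and `L/ℚ` a finite Galois extension with
Galois group isomorphic to `G` which is tamely ramified (every ramified rational prime
is prime to `|G|`). Then at least `rank G` rational primes ramify in `L`. -/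
theorem rank_le_card_ramified_primes (ℓ : ℕ) (hℓ : ℓ.Prime) (G : Type) [Group G] [Finite G]
    (hG : IsPGroup ℓ G) (L : Type) [Field L] [NumberField L] [IsGalois ℚ L]
    (e : (L ≃ₐ[ℚ] L) ≃* G)
    (htame : ∀ p : ℕ, p.Prime → RamifiesIn p L → Nat.Coprime p (Nat.card G)) :
    Group.rank G ≤ {p : ℕ | p.Prime ∧ RamifiesIn p L}.ncard := by
  have : Fact ℓ.Prime := ⟨hℓ⟩
  have : Group.IsNilpotent (L ≃ₐ[ℚ] L) := (hG.of_equiv e.symm).isNilpotent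
  rw [← Nat.card_congr e.toEquiv] at htame
  rw [← Group.rank_congr e]
  exact rank_le_card_ramified_primes_general fun P _ ↦
    ramificationIdx_int_notMem_of_coprime_card htame P
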